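/- arXiv:2310.14600 — 4 statements merged into one kernel-verified Lean document; each statement's English description precedes it below -/
import Mathlib

section
/- Public certifiability is not closed under union of sets of agents: there exist a type W of worlds, a type of agents, accessibility relations R each of which is an equivalence relation on W, a proposition φ : W → Prop, a world w, and sets A and B of agents such that PC A φ w and PC B φ w both hold but PC (A ∪ B) φ w fails. -/
/-- Agent `x` knows `φ` at world `w`. -/
def K {W Agent : Type*} (R : Agent → W → W → Prop) (x : Agent) (φ : W → Prop) (w : W) : Prop :=
  ∀ v, R x w v → φ v

/-- `φ` is publicly certified amongst the set `A` of agents at world `w`. -/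
def PC {W Agent : Type*} (R : Agent → W → W → Prop) (A : Set Agent) (φ : W → Prop) (w : W) : Prop :=
  ∀ x ∈ A, ∀ y ∈ A, K R x (K R y φ) w

/-! An agent with transitive accessibility certifies on its own whatever it knows. Hence two such
agents `x`, `y` refute closure under union as soon as some world `u` is reached from `w` by a step
of `x` followed by a step of `y`, but not by either agent in one step: take for `φ` "the world is
not `u`". Such a `u` exists when each agent observes exactly whether the world is a given one, with
`x` watching for `u` and `y` watching for `w`, and there is a third world to pass through. -/

section Frame

variable {W Agent : Type*} {R : Agent → W → W → Prop} {A : Set Agent} {φ : W → Prop}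
  {x y : Agent} {u w : W}

theorem K.positive_introspection [IsTrans W (R x)] (h : K R x φ w) : K R x (K R x φ) w :=
  fun _ hwv _ hvu => h _ (_root_.trans hwv hvu)

theorem k_ne_iff : K R x (· ≠ u) w ↔ ¬ R x w u :=
  ⟨fun h hwu => h u hwu rfl, fun h _ hwv hvu => h (hvu ▸ hwv)⟩

theorem k_k_iff_forall_comp :
    K R x (K R y φ) w ↔ ∀ u, Relation.Comp (R x) (R y) w u → φ u :=
  ⟨fun h _ ⟨v, hwv, hvu⟩ => h v hwv _ hvu, fun h v hwv _ hvu => h _ ⟨v, hwv, hvu⟩⟩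

theorem pc_singleton_of_k [IsTrans W (R x)] (h : K R x φ w) : PC R {x} φ w := by
  rintro _ rfl _ rfl
  exact h.positive_introspection

theorem not_pc_of_comp (hx : x ∈ A) (hy : y ∈ A) (hwu : Relation.Comp (R x) (R y) w u)
    (hu : ¬ φ u) : ¬ PC R A φ w :=
  fun h => hu (k_k_iff_forall_comp.mp (h x hx y hy) u hwu)

theorem pc_singletons_and_not_pc_union [IsTrans W (R x)] [IsTrans W (R y)]
    (hx : ¬ R x w u) (hy : ¬ R y w u) (hxy : Relation.Comp (R x) (R y) w u) :
    PC R {x} (· ≠ u) w ∧ PC R {y} (· ≠ u) w ∧ ¬ PC R ({x} ∪ {y}) (· ≠ u) w :=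
  ⟨pc_singleton_of_k (k_ne_iff.mpr hx), pc_singleton_of_k (k_ne_iff.mpr hy),
    not_pc_of_comp (.inl rfl) (.inr rfl) hxy (not_not.mpr rfl)⟩

end Frame

/-- The accessibility relation of an agent who observes only whether the world is `a`; the agent
is identified with the world `a` that it watches for. -/
def WatchRel {W : Type*} (a v w : W) : Prop :=
  v = a ↔ w = a

namespace WatchRel

variable {W : Type*} {a u v w : W}

theorem equivalence (a : W) : Equivalence (WatchRel a) :=
  ⟨fun _ => Iff.rfl, Iff.symm, Iff.trans⟩

instance : IsTrans W (WatchRel a) :=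
  (equivalence a).isTrans

theorem of_ne (hv : v ≠ a) (hw : w ≠ a) : WatchRel a v w :=
  iff_of_false hv hw

theorem self_left_iff : WatchRel a a v ↔ v = a := by
  simp [WatchRel]

theorem self_right_iff : WatchRel a v a ↔ v = a := by
  simp [WatchRel]

theorem comp_of_ne (hvw : v ≠ w) (hvu : v ≠ u) (hwu : w ≠ u) :
    Relation.Comp (WatchRel u) (WatchRel w) w u :=
  ⟨v, of_ne hwu hvu, of_ne hvw hwu.symm⟩

end WatchRel

theorem pc_not_closed_under_union :
    ∃ (W Agent : Type) (R : Agent → W → W → Prop),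
      (∀ x : Agent, Equivalence (R x)) ∧
      ∃ (φ : W → Prop) (w : W) (A B : Set Agent),
        PC R A φ w ∧ PC R B φ w ∧ ¬ PC R (A ∪ B) φ w := by
  have hne : (0 : Fin 3) ≠ 2 := by decide
  have hnot₂ : ¬ WatchRel (2 : Fin 3) 0 2 := WatchRel.self_right_iff.not.mpr hne
  have hnot₀ : ¬ WatchRel (0 : Fin 3) 0 2 := WatchRel.self_left_iff.not.mpr hne.symm
  have hcomp : Relation.Comp (WatchRel (2 : Fin 3)) (WatchRel 0) 0 2 :=
    WatchRel.comp_of_ne (v := 1) (by decide) (by decide) hne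
  exact ⟨Fin 3, Fin 3, WatchRel, WatchRel.equivalence, (· ≠ 2), 0, {2}, {0},
    pc_singletons_and_not_pc_union hnot₂ hnot₀ hcomp⟩
end

section
/- At any time each asset has at most one owner: for any ledger bc, any asset α, and any agents a and a', if Owns bc a α and Owns bc a' α then a = a'. -/
/-- An entry of the blockchain ledger. -/
inductive Entry (Agent Asset : Type*) where
  | mint (a : Agent) (α : Asset)
  | transfer (old new : Agent) (α : Asset)
  | pay (b s : Agent) (c : ℝ)

variable {Agent Asset : Type*}

/-- If `e` is a token entry for asset `α`, the agent it assigns ownership of `α` to;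
otherwise `none`. -/
def tokenOwner [DecidableEq Asset] (e : Entry Agent Asset) (α : Asset) : Option Agent :=
  match e with
  | .mint a β => if β = α then some a else none
  | .transfer _ new β => if β = α then some new else none
  | .pay _ _ _ => none

/-- `Owns bc a α`: some position of `bc` holds a token entry for `α` assigning
ownership to `a`, and no later position holds a token entry for `α`. -/
def Owns [DecidableEq Asset] (bc : List (Entry Agent Asset)) (a : Agent) (α : Asset) : Prop :=
  ∃ i : Fin bc.length, tokenOwner (bc.get i) α = some a ∧
    ∀ j : Fin bc.length, (i : ℕ) < (j : ℕ) → tokenOwner (bc.get j) α = none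

/-- The current owner of `α`, computed by a left fold over the ledger. -/
def currentOwner [DecidableEq Asset] (bc : List (Entry Agent Asset)) (α : Asset) : Option Agent :=
  bc.foldl (fun acc e => match tokenOwner e α with | some a => some a | none => acc) none

/-- A ledger is valid iff each mint concerns an asset currently unowned and each
transfer is from the current owner; payments have no precondition. -/
def Valid [DecidableEq Asset] (bc : List (Entry Agent Asset)) : Prop :=
  ∀ i : Fin bc.length,
    match bc.get i with
    | .mint _ α => currentOwner (bc.take i) α = none
    | .transfer old _ α => currentOwner (bc.take i) α = some old
    | .pay _ _ _ => True

/-- The list, in ledger order, of agents assigned ownership of `α` by the token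
entries for `α` in `bc`. -/
def ownerHistory [DecidableEq Asset] (bc : List (Entry Agent Asset)) (α : Asset) : List Agent :=
  bc.filterMap (fun e => tokenOwner e α)

/-- `isToken e` holds iff `e` is a mint or a transfer. -/
def isToken : Entry Agent Asset → Bool
  | .mint _ _ => true
  | .transfer _ _ _ => true
  | .pay _ _ _ => false

/-- The positions of `bc` holding a token entry for `α`, so that `Owns` can be read off the last of
them. They are indexed as in `Owns`, by `Fin bc.length`. -/
def tokenPositions [DecidableEq Asset] (bc : List (Entry Agent Asset)) (α : Asset) :
    Set (Fin bc.length) :=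
  {i | tokenOwner (bc.get i) α ≠ none}

theorem mem_tokenPositions_of_tokenOwner_eq_some [DecidableEq Asset]
    {bc : List (Entry Agent Asset)} {α : Asset} {a : Agent} {i : Fin bc.length}
    (h : tokenOwner (bc.get i) α = some a) : i ∈ tokenPositions bc α :=
  Option.ne_none_iff_exists'.mpr ⟨a, h⟩

theorem mem_upperBounds_tokenPositions_iff [DecidableEq Asset]
    {bc : List (Entry Agent Asset)} {α : Asset} {i : Fin bc.length} :
    i ∈ upperBounds (tokenPositions bc α) ↔ ∀ j, i < j → tokenOwner (bc.get j) α = none :=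
  forall_congr' fun _ => not_imp_comm.trans (by rw [not_le])

theorem owns_iff_exists_isGreatest_tokenPositions [DecidableEq Asset]
    {bc : List (Entry Agent Asset)} {α : Asset} {a : Agent} :
    Owns bc a α ↔
      ∃ i, IsGreatest (tokenPositions bc α) i ∧ tokenOwner (bc.get i) α = some a := by
  constructor
  · rintro ⟨i, owner, no_later⟩
    exact ⟨i, ⟨mem_tokenPositions_of_tokenOwner_eq_some owner,
      mem_upperBounds_tokenPositions_iff.mpr no_later⟩, owner⟩
  · rintro ⟨i, greatest, owner⟩
    exact ⟨i, owner, mem_upperBounds_tokenPositions_iff.mp greatest.2⟩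

theorem owns_unique [DecidableEq Asset] (bc : List (Entry Agent Asset))
    (α : Asset) (a a' : Agent) (h : Owns bc a α) (h' : Owns bc a' α) :
    a = a' := by
  obtain ⟨i, last_i, owner⟩ := owns_iff_exists_isGreatest_tokenPositions.mp h
  obtain ⟨j, last_j, owner'⟩ := owns_iff_exists_isGreatest_tokenPositions.mp h'
  obtain rfl : i = j := last_i.unique last_j
  exact Option.some.inj (owner.symm.trans owner')
end

section
/- The owner computed by scanning the ledger agrees with the ownership relation: for any ledger bc, asset α and agent a, currentOwner bc α = some a if and only if Owns bc a α. -/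
variable {Agent Asset : Type*}

section

variable {β γ : Type*}

theorem foldl_or_eq_findSomeRev?_or (f : β → Option γ) (l : List β) (init : Option γ) :
    l.foldl (fun acc x => (f x).or acc) init = (l.findSomeRev? f).or init := by
  induction l generalizing init with
  | nil => simp only [List.foldl_nil, List.findSomeRev?, Option.none_or]
  | cons x l ih =>
    rw [List.foldl_cons, ih, ← Option.or_assoc]
    cases h : l.findSomeRev? f <;> simp only [List.findSomeRev?, h, Option.none_or, Option.some_or]

theorem findSomeRev?_eq_some_iff {f : β → Option γ} {l : List β} {c : γ} :
    l.findSomeRev? f = some c ↔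
      ∃ l₁ x l₂, l = l₁ ++ x :: l₂ ∧ f x = some c ∧ ∀ y ∈ l₂, f y = none := by
  rw [List.findSomeRev?_eq_findSome?_reverse, List.findSome?_eq_some_iff]
  constructor
  · rintro ⟨l₂, x, l₁, hl, hx, hl₂⟩
    refine ⟨l₁.reverse, x, l₂.reverse, ?_, hx, by simpa only [List.mem_reverse] using hl₂⟩
    simpa using List.reverse_eq_iff.mp hl
  · rintro ⟨l₁, x, l₂, rfl, hx, hl₂⟩
    exact ⟨l₂.reverse, x, l₁.reverse, by simp, hx, by simpa only [List.mem_reverse] using hl₂⟩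

theorem exists_get_and_forall_gt_iff_exists_append_cons {p q : β → Prop} {l : List β} :
    (∃ i : Fin l.length, p (l.get i) ∧ ∀ j : Fin l.length, (i : ℕ) < j → q (l.get j)) ↔
      ∃ l₁ x l₂, l = l₁ ++ x :: l₂ ∧ p x ∧ ∀ y ∈ l₂, q y := by
  constructor
  · rintro ⟨i, hp, hq⟩
    refine ⟨l.take i, l.get i, l.drop (i + 1), ?_, hp, fun y hy => ?_⟩
    · rw [List.get_eq_getElem, ← List.drop_eq_getElem_cons i.isLt, List.take_append_drop]
    · obtain ⟨k, hk, rfl⟩ := List.mem_drop_iff_getElem.mp hy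
      exact hq ⟨i + 1 + k, by omega⟩ (by simp only; omega)
  · rintro ⟨l₁, x, l₂, rfl, hp, hq⟩
    refine ⟨⟨l₁.length, by simp⟩, by simpa using hp, fun ⟨j, hj⟩ hlt => hq _ ?_⟩
    obtain ⟨k, rfl⟩ := Nat.exists_eq_add_of_lt hlt
    simp [List.getElem_append_right, Nat.add_assoc]

end

theorem currentOwner_eq_findSomeRev? [DecidableEq Asset]
    (bc : List (Entry Agent Asset)) (α : Asset) :
    currentOwner bc α = bc.findSomeRev? (tokenOwner · α) := by
  have step_eq_or (acc : Option Agent) (e : Entry Agent Asset) :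
      (match tokenOwner e α with | some a => some a | none => acc) =
        (tokenOwner e α).or acc := by
    cases tokenOwner e α <;> rfl
  simp only [currentOwner, step_eq_or, foldl_or_eq_findSomeRev?_or, Option.or_none]

theorem owns_iff_exists_append_cons [DecidableEq Asset]
    {bc : List (Entry Agent Asset)} {a : Agent} {α : Asset} :
    Owns bc a α ↔ ∃ earlier e later, bc = earlier ++ e :: later ∧
      tokenOwner e α = some a ∧ ∀ e' ∈ later, tokenOwner e' α = none :=
  exists_get_and_forall_gt_iff_exists_append_cons
    (p := (tokenOwner · α = some a)) (q := (tokenOwner · α = none))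

theorem currentOwner_eq_iff_owns [DecidableEq Asset]
    (bc : List (Entry Agent Asset)) (α : Asset) (a : Agent) :
    currentOwner bc α = some a ↔ Owns bc a α := by
  rw [currentOwner_eq_findSomeRev?, findSomeRev?_eq_some_iff, owns_iff_exists_append_cons]
end

section
/- In a valid ledger each asset is minted at most once: if bc is valid and the entries at positions i and j of bc are both mints of the same asset α, then i = j. -/
variable {Agent Asset : Type*}

section

variable [DecidableEq Asset] {bc : List (Entry Agent Asset)} {α : Asset}

theorem currentOwner_append_singleton (bc : List (Entry Agent Asset)) (e : Entry Agent Asset)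
    (α : Asset) :
    currentOwner (bc ++ [e]) α = (tokenOwner e α).or (currentOwner bc α) := by
  rw [currentOwner, List.foldl_concat, ← currentOwner]
  cases tokenOwner e α <;> rfl

theorem ownerHistory_append_singleton (bc : List (Entry Agent Asset)) (e : Entry Agent Asset)
    (α : Asset) :
    ownerHistory (bc ++ [e]) α = ownerHistory bc α ++ (tokenOwner e α).toList := by
  rw [ownerHistory, List.filterMap_append, ← ownerHistory]
  cases h : tokenOwner e α <;> simp [h]

theorem currentOwner_eq_getLast?_ownerHistory (bc : List (Entry Agent Asset)) (α : Asset) :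
    currentOwner bc α = (ownerHistory bc α).getLast? := by
  induction bc using List.reverseRecOn with
  | nil => rfl
  | append_singleton bc e ih =>
    rw [currentOwner_append_singleton, ownerHistory_append_singleton, List.getLast?_append, ih]
    cases tokenOwner e α <;> rfl

theorem currentOwner_eq_none_iff :
    currentOwner bc α = none ↔ ∀ e ∈ bc, tokenOwner e α = none := by
  rw [currentOwner_eq_getLast?_ownerHistory, List.getLast?_eq_none_iff, ownerHistory,
    List.filterMap_eq_nil_iff]

theorem le_of_currentOwner_take_eq_none {i j : Fin bc.length}
    (hi : currentOwner (bc.take i) α = none) (hj : tokenOwner (bc.get j) α ≠ none) :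
    i ≤ j := by
  by_contra! hlt
  have hmem : bc.get j ∈ bc.take i :=
    List.mem_take_iff_getElem.mpr ⟨j, lt_min hlt j.isLt, rfl⟩
  exact hj (currentOwner_eq_none_iff.mp hi _ hmem)

theorem tokenOwner_mint_ne_none (a : Agent) (α : Asset) :
    tokenOwner (Entry.mint a α) α ≠ none := by
  simp [tokenOwner]

theorem Valid.currentOwner_take_eq_none_of_mint (h : Valid bc) {i : Fin bc.length} {a : Agent}
    (hi : bc.get i = Entry.mint a α) :
    currentOwner (bc.take i) α = none := by
  have hvalid := h i
  rwa [hi] at hvalid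

theorem mint_unique_general {i j : Fin bc.length}
    (hi : currentOwner (bc.take i) α = none) (hi' : tokenOwner (bc.get i) α ≠ none)
    (hj : currentOwner (bc.take j) α = none) (hj' : tokenOwner (bc.get j) α ≠ none) :
    i = j :=
  le_antisymm (le_of_currentOwner_take_eq_none hi hj') (le_of_currentOwner_take_eq_none hj hi')

end

theorem mint_unique [DecidableEq Asset] (bc : List (Entry Agent Asset))
    (h : Valid bc) (α : Asset) (a a' : Agent) (i j : Fin bc.length)
    (hi : bc.get i = Entry.mint a α) (hj : bc.get j = Entry.mint a' α) :
    i = j :=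
  mint_unique_general
    (h.currentOwner_take_eq_none_of_mint hi) (hi ▸ tokenOwner_mint_ne_none a α)
    (h.currentOwner_take_eq_none_of_mint hj) (hj ▸ tokenOwner_mint_ne_none a' α)
end
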